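/- Let h and k be coprime odd positive integers and let p ≥ 1 be an odd integer. Then 2 (hk)^p Σ (−1)^{u+v−1} E_p(u/k + v/h) = Σ_{s=0}^{p} C(p,s) (hk)^{p−s} E_s E_{p−s} − Σ_{s=0}^{p} C(p,s) h^s k^{p−s} E_s E_{p−s} − 2 E_p, where the sum on the left runs over all pairs of integers (u, v) with 0 ≤ u ≤ k−1, 0 ≤ v ≤ h−1 and uh + vk < hk, E_p(x) is the p-th Euler polynomial, and E_s denotes the s-th Euler number. -/

import Mathlib

open Finset

/-- The Euler numbers `E_n`, defined by `E_0 = 1` and the recurrence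
`∑_{l=0}^{n} C(n,l) E_l + E_n = 0` for `n ≥ 1`. -/
def eulerNumber : ℕ → ℚ
  | 0 => 1
  | n + 1 => -(∑ l : Fin (n + 1), ((n + 1).choose l : ℚ) * eulerNumber l) / 2

/-- The Euler polynomials `E_n(x) = ∑_{l=0}^{n} C(n,l) E_l x^{n-l}`. -/
noncomputable def eulerPoly (n : ℕ) (x : ℝ) : ℝ :=
  ∑ l ∈ Finset.range (n + 1), (n.choose l : ℝ) * (eulerNumber l : ℝ) * x ^ (n - l)

/-- The Euler function `Ē_p(x) = (-1)^⌊x⌋ E_p(x - ⌊x⌋)`. -/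
noncomputable def eulerFun (p : ℕ) (x : ℝ) : ℝ := (-1 : ℝ) ^ ⌊x⌋ * eulerPoly p (x - ⌊x⌋)

/-- The Dedekind-type DC sum `T_p(h,k) = 2 ∑_{u=1}^{k-1} (-1)^{u-1} (u/k) Ē_p(hu/k)`. -/
noncomputable def dcSum (p h k : ℕ) : ℝ :=
  2 * ∑ u ∈ Finset.Ico 1 k, (-1 : ℝ) ^ (u - 1) * ((u : ℝ) / k) * eulerFun p (h * u / k)

open PowerSeries in
/-- exponential generating series of Euler numbers -/
noncomputable def eulSer : PowerSeries ℝ :=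
  PowerSeries.mk fun n => (eulerNumber n : ℝ) / (n.factorial : ℝ)

lemma eulerNumber_rec (n : ℕ) :
    ∑ l ∈ Finset.range (n + 2), (((n+1).choose l : ℕ) : ℝ) * (eulerNumber l : ℝ)
      + (eulerNumber (n+1) : ℝ) = 0 := by
  have h1 : eulerNumber (n+1) =
      -(∑ l ∈ Finset.range (n+1), ((n + 1).choose l : ℚ) * eulerNumber l) / 2 := by
    rw [eulerNumber, Finset.sum_range]
  have h2 : ∑ l ∈ Finset.range (n + 2), (((n+1).choose l : ℕ) : ℚ) * eulerNumber l
      + eulerNumber (n+1) = 0 := by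
    rw [Finset.sum_range_succ, Nat.choose_self, h1]
    push_cast
    ring
  exact_mod_cast h2

lemma coeff_mul_egf (f g : ℕ → ℝ) (n : ℕ) :
    PowerSeries.coeff n ((PowerSeries.mk fun i => f i / (i.factorial : ℝ)) *
      (PowerSeries.mk fun i => g i / (i.factorial : ℝ))) * (n.factorial : ℝ)
      = ∑ s ∈ Finset.range (n+1), (n.choose s : ℝ) * f s * g (n - s) := by
  rw [PowerSeries.coeff_mul, Finset.Nat.sum_antidiagonal_eq_sum_range_succ_mk, Finset.sum_mul]
  refine Finset.sum_congr rfl fun s hs => ?_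
  have hs' : s ≤ n := by simpa [Nat.lt_succ_iff] using hs
  simp only [PowerSeries.coeff_mk]
  rw [Nat.cast_choose ℝ hs']
  have h1 : (s.factorial : ℝ) ≠ 0 := by positivity
  have h2 : ((n-s).factorial : ℝ) ≠ 0 := by positivity
  field_simp

lemma rescale_eulSer (a : ℝ) : PowerSeries.rescale a eulSer =
    PowerSeries.mk fun i => (a ^ i * (eulerNumber i : ℝ)) / (i.factorial : ℝ) := by
  ext n
  simp [eulSer, PowerSeries.coeff_rescale, mul_div_assoc]

lemma rescale_exp' (a : ℝ) : PowerSeries.rescale a (PowerSeries.exp ℝ) =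
    PowerSeries.mk fun i => (a ^ i) / (i.factorial : ℝ) := by
  ext n
  simp [PowerSeries.coeff_rescale, PowerSeries.coeff_exp, div_eq_mul_inv]

lemma exp_pow' (n : ℕ) : PowerSeries.exp ℝ ^ n =
    PowerSeries.rescale (n : ℝ) (PowerSeries.exp ℝ) :=
  PowerSeries.exp_pow_eq_rescale_exp n

lemma eulSer_mul : eulSer * (1 + PowerSeries.exp ℝ) = 2 := by
  ext n
  have hn : (n.factorial : ℝ) ≠ 0 := by positivity
  apply mul_right_cancel₀ hn
  have h1 : eulSer = PowerSeries.mk fun i => (eulerNumber i : ℝ) / (i.factorial : ℝ) := rfl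
  have h2 : PowerSeries.exp ℝ = PowerSeries.mk fun i => (1:ℝ) / (i.factorial : ℝ) := by
    ext i; simp [PowerSeries.coeff_exp]
  have key := coeff_mul_egf (fun i => (eulerNumber i : ℝ)) (fun _ => 1) n
  rw [← h2, ← h1] at key
  rw [mul_add, mul_one, map_add, add_mul, key]
  have h3 : PowerSeries.coeff n eulSer * (n.factorial : ℝ) = eulerNumber n := by
    rw [h1, PowerSeries.coeff_mk]; field_simp
  rw [h3]
  have h4 : (2 : PowerSeries ℝ) = PowerSeries.C (2:ℝ) :=
    (map_ofNat (PowerSeries.C (R := ℝ)) 2).symm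
  rw [h4, PowerSeries.coeff_C]
  rcases n with _ | n
  · simp [eulerNumber]; norm_num
  · have := eulerNumber_rec n
    simp only [mul_one]
    simp only [Nat.add_eq_zero_iff, one_ne_zero, and_false, if_false, zero_mul]
    linarith

lemma eulSer_rescale_mul (n : ℕ) (hn : Odd n) :
    PowerSeries.rescale (n : ℝ) eulSer * (1 - (-PowerSeries.exp ℝ) ^ n) = 2 := by
  rw [hn.neg_pow, exp_pow', sub_neg_eq_add]
  have := congrArg (PowerSeries.rescale (n : ℝ)) eulSer_mul
  rw [map_mul, map_add, map_one, map_ofNat] at this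
  exact this

lemma mod_bij {M : Type*} [AddCommMonoid M] (h k : ℕ) (hh : 0 < h) (hk : 0 < k)
    (hcop : Nat.Coprime h k) (f : ℕ → M) :
    ∑ uv ∈ Finset.range k ×ˢ Finset.range h, f ((uv.1 * h + uv.2 * k) % (h * k))
      = ∑ r ∈ Finset.range (h * k), f r := by
  have hinj : Set.InjOn (fun uv : ℕ × ℕ => (uv.1 * h + uv.2 * k) % (h * k))
      (Finset.range k ×ˢ Finset.range h : Finset (ℕ × ℕ)) := by
    rintro ⟨u, v⟩ h1 ⟨u', v'⟩ h2 he
    simp only [Finset.coe_product, Set.mem_prod, Finset.mem_coe, Finset.mem_range] at h1 h2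
    have he' : u * h + v * k ≡ u' * h + v' * k [MOD h * k] := he
    have hmk : u * h ≡ u' * h [MOD k] := by
      have := he'.of_mul_left h
      simpa [Nat.ModEq] using this
    have hmh : v * k ≡ v' * k [MOD h] := by
      have := he'.of_mul_right k
      simpa [Nat.ModEq] using this
    have e1 : u ≡ u' [MOD k] := Nat.ModEq.cancel_right_of_coprime (Nat.Coprime.symm hcop) hmk
    have e2 : v ≡ v' [MOD h] := Nat.ModEq.cancel_right_of_coprime hcop hmh
    rw [Prod.mk.injEq]
    exact ⟨e1.eq_of_lt_of_lt h1.1 h2.1, e2.eq_of_lt_of_lt h1.2 h2.2⟩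
  rw [← Finset.sum_image (f := f) hinj]
  congr 1
  apply Finset.eq_of_subset_of_card_le
  · intro r hr
    simp only [Finset.mem_image] at hr
    obtain ⟨uv, _, rfl⟩ := hr
    exact Finset.mem_range.2 (Nat.mod_lt _ (by positivity))
  · rw [Finset.card_image_of_injOn hinj]
    simp [mul_comm]

lemma semigroup_id {R : Type*} [CommRing R] [IsDomain R] (h k : ℕ) (hh : 0 < h) (hk : 0 < k)
    (hcop : Nat.Coprime h k) (z : R) (hz : 1 - z ^ (h * k) ≠ 0) :
    (∑ uv ∈ (Finset.range k ×ˢ Finset.range h).filter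
            (fun uv => uv.1 * h + uv.2 * k < h * k), z ^ (uv.1 * h + uv.2 * k))
      * (1 - z ^ h) * (1 - z ^ k) * (1 - z)
      = (1 - z) * (1 - z ^ (h * k)) - (1 - z ^ h) * (1 - z ^ k) * z ^ (h * k) := by
  set P := ∑ uv ∈ (Finset.range k ×ˢ Finset.range h).filter
            (fun uv => uv.1 * h + uv.2 * k < h * k), z ^ (uv.1 * h + uv.2 * k) with hP
  set Q := ∑ uv ∈ (Finset.range k ×ˢ Finset.range h).filter
            (fun uv => ¬ uv.1 * h + uv.2 * k < h * k), z ^ ((uv.1 * h + uv.2 * k) % (h * k)) with hQ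
  have hmod := mod_bij h k hh hk hcop (fun r => z ^ r)
  rw [← Finset.sum_filter_add_sum_filter_not _ (fun uv => uv.1 * h + uv.2 * k < h * k)] at hmod
  have hP' : ∑ uv ∈ (Finset.range k ×ˢ Finset.range h).filter
            (fun uv => uv.1 * h + uv.2 * k < h * k), z ^ ((uv.1 * h + uv.2 * k) % (h * k)) = P := by
    refine Finset.sum_congr rfl fun uv huv => ?_
    rw [Nat.mod_eq_of_lt (Finset.mem_filter.1 huv).2]
  rw [hP', ← hQ] at hmod
  have hgeo : (P + Q) * (1 - z) = 1 - z ^ (h * k) := by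
    rw [hmod]; exact geom_sum_mul_neg z _
  have hbox : ∑ uv ∈ Finset.range k ×ˢ Finset.range h, z ^ (uv.1 * h + uv.2 * k)
      = P + z ^ (h * k) * Q := by
    rw [← Finset.sum_filter_add_sum_filter_not _ (fun uv => uv.1 * h + uv.2 * k < h * k), ← hP,
      hQ, Finset.mul_sum]
    congr 1
    refine Finset.sum_congr rfl fun uv huv => ?_
    obtain ⟨h1, h2⟩ := Finset.mem_filter.1 huv
    rw [Finset.mem_product, Finset.mem_range, Finset.mem_range] at h1
    have h3 : uv.1 * h < h * k := by rw [mul_comm h k]; exact Nat.mul_lt_mul_of_pos_right h1.1 hh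
    have h4 : uv.2 * k < h * k := Nat.mul_lt_mul_of_pos_right h1.2 hk
    rw [← pow_add, Nat.mod_eq_sub_mod (by omega), Nat.mod_eq_of_lt (by omega)]
    congr 1
    omega
  have hbox2 : (∑ uv ∈ Finset.range k ×ˢ Finset.range h, z ^ (uv.1 * h + uv.2 * k))
      * (1 - z ^ h) * (1 - z ^ k) = (1 - z ^ (h * k)) ^ 2 := by
    have e1 := geom_sum_mul_neg (z ^ h) k
    have e2 := geom_sum_mul_neg (z ^ k) h
    have e3 : ∑ uv ∈ Finset.range k ×ˢ Finset.range h, z ^ (uv.1 * h + uv.2 * k)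
        = (∑ u ∈ Finset.range k, (z ^ h) ^ u) * ∑ v ∈ Finset.range h, (z ^ k) ^ v := by
      rw [Finset.sum_mul_sum, Finset.sum_product]
      refine Finset.sum_congr rfl fun u _ => Finset.sum_congr rfl fun v _ => ?_
      rw [← pow_mul, ← pow_mul, ← pow_add]; congr 1; ring
    rw [← pow_mul] at e1 e2
    rw [mul_comm k h] at e2
    rw [e3]
    linear_combination (∑ v ∈ Finset.range h, (z ^ k) ^ v) * (1 - z ^ k) * e1
      + (1 - z ^ (h * k)) * e2
  rw [hbox] at hbox2
  apply mul_right_cancel₀ hz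
  linear_combination (1 - z) * hbox2
    - (1 - z ^ h) * (1 - z ^ k) * z ^ (h * k) * hgeo

/-- For coprime odd positive `h, k` and odd `p ≥ 1`,
`2 (hk)^p ∑_{(u,v) : 0 ≤ u ≤ k−1, 0 ≤ v ≤ h−1, uh+vk < hk} (−1)^{u+v−1} E_p(u/k + v/h)
  = ∑_{s=0}^{p} C(p,s) (hk)^{p−s} E_s E_{p−s} − ∑_{s=0}^{p} C(p,s) h^s k^{p−s} E_s E_{p−s} − 2 E_p`. -/
theorem dcSum_reciprocity_aux3 (h k p : ℕ) (hh : 0 < h) (hk : 0 < k)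
    (hhodd : Odd h) (hkodd : Odd k) (hcop : Nat.Coprime h k)
    (hp : 1 ≤ p) (hpodd : Odd p) :
    2 * ((h : ℝ) * k) ^ p *
        ∑ uv ∈ (Finset.range k ×ˢ Finset.range h).filter
            (fun uv => uv.1 * h + uv.2 * k < h * k),
          (-1 : ℝ) ^ (uv.1 + uv.2 + 1) * eulerPoly p ((uv.1 : ℝ) / k + (uv.2 : ℝ) / h) =
      ∑ s ∈ Finset.range (p + 1),
          (p.choose s : ℝ) * ((h : ℝ) * k) ^ (p - s) * (eulerNumber s : ℝ) *
            (eulerNumber (p - s) : ℝ)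
        - ∑ s ∈ Finset.range (p + 1),
            (p.choose s : ℝ) * (h : ℝ) ^ s * (k : ℝ) ^ (p - s) * (eulerNumber s : ℝ) *
              (eulerNumber (p - s) : ℝ)
        - 2 * (eulerNumber p : ℝ) := by
  have hN : Odd (h * k) := hhodd.mul hkodd
  set z : PowerSeries ℝ := -PowerSeries.exp ℝ with hzdef
  have ea := eulSer_rescale_mul h hhodd
  have eb := eulSer_rescale_mul k hkodd
  have ec := eulSer_rescale_mul 1 odd_one
  have eN := eulSer_rescale_mul (h * k) hN
  rw [← hzdef] at ea eb ec eN
  rw [Nat.cast_one, PowerSeries.rescale_one, RingHom.id_apply, pow_one] at ec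
  have two_ne : (2 : PowerSeries ℝ) ≠ 0 := fun h0 => by
    have h1 : PowerSeries.constantCoeff (2 : PowerSeries ℝ) = 0 := by rw [h0, map_zero]
    rw [map_ofNat] at h1
    norm_num at h1
  have na : 1 - z ^ h ≠ 0 := fun h0 => two_ne (by rw [← ea, h0, mul_zero])
  have nb : 1 - z ^ k ≠ 0 := fun h0 => two_ne (by rw [← eb, h0, mul_zero])
  have nc : 1 - z ≠ 0 := fun h0 => two_ne (by rw [← ec, h0, mul_zero])
  have nN : 1 - z ^ (h * k) ≠ 0 := fun h0 => two_ne (by rw [← eN, h0, mul_zero])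
  have sid := semigroup_id h k hh hk hcop z nN
  set P := ∑ uv ∈ (Finset.range k ×ˢ Finset.range h).filter
            (fun uv => uv.1 * h + uv.2 * k < h * k), z ^ (uv.1 * h + uv.2 * k) with hP
  set Ea := PowerSeries.rescale (h : ℝ) eulSer with hEa
  set Eb := PowerSeries.rescale (k : ℝ) eulSer with hEb
  set EN := PowerSeries.rescale ((h * k : ℕ) : ℝ) eulSer with hEN
  have main : -(2 * (EN * P)) = eulSer * EN - Ea * Eb - 2 * eulSer := by
    apply mul_right_cancel₀ (mul_ne_zero (mul_ne_zero na nb) (mul_ne_zero nc nN))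
    generalize z ^ (h * k) = D at *
    generalize z ^ h = a at *
    generalize z ^ k = b at *
    have q1 : eulSer * EN * ((1 - z) * (1 - D)) = 4 := by
      linear_combination EN * (1 - D) * ec + 2 * eN
    have q2 : Ea * Eb * ((1 - a) * (1 - b)) = 4 := by
      linear_combination Eb * (1 - b) * ea + 2 * eb
    linear_combination (-2 * P * (1 - a) * (1 - b) * (1 - z)) * eN - 4 * sid
      - (1 - a) * (1 - b) * q1 + (1 - z) * (1 - D) * q2 + 2 * (1 - a) * (1 - b) * (1 - D) * ec
  have cm := congrArg (fun F => PowerSeries.coeff p F * (p.factorial : ℝ)) main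
  have two_mul_coeff : ∀ F : PowerSeries ℝ, PowerSeries.coeff p (2 * F)
      = 2 * PowerSeries.coeff p F := fun F => by rw [two_mul, map_add, two_mul]
  simp only [map_neg, map_sub, two_mul_coeff, sub_mul] at cm
  have c1 : PowerSeries.coeff p eulSer * (p.factorial : ℝ) = eulerNumber p := by
    have hn : (p.factorial : ℝ) ≠ 0 := by positivity
    rw [eulSer, PowerSeries.coeff_mk]; field_simp
  have c2 : PowerSeries.coeff p (eulSer * EN) * (p.factorial : ℝ) =
      ∑ s ∈ Finset.range (p + 1),
          (p.choose s : ℝ) * ((h : ℝ) * k) ^ (p - s) * (eulerNumber s : ℝ) *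
            (eulerNumber (p - s) : ℝ) := by
    rw [hEN, rescale_eulSer, eulSer, coeff_mul_egf]
    refine Finset.sum_congr rfl fun s _ => ?_
    push_cast; ring
  have c3 : PowerSeries.coeff p (Ea * Eb) * (p.factorial : ℝ) =
      ∑ s ∈ Finset.range (p + 1),
            (p.choose s : ℝ) * (h : ℝ) ^ s * (k : ℝ) ^ (p - s) * (eulerNumber s : ℝ) *
              (eulerNumber (p - s) : ℝ) := by
    rw [hEa, hEb, rescale_eulSer, rescale_eulSer, coeff_mul_egf]
    refine Finset.sum_congr rfl fun s _ => ?_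
    ring
  have c4 : -(((h : ℝ) * k) ^ p *
        ∑ uv ∈ (Finset.range k ×ˢ Finset.range h).filter
            (fun uv => uv.1 * h + uv.2 * k < h * k),
          (-1 : ℝ) ^ (uv.1 + uv.2 + 1) * eulerPoly p ((uv.1 : ℝ) / k + (uv.2 : ℝ) / h)) =
      PowerSeries.coeff p (EN * P) * (p.factorial : ℝ) := by
    rw [hP, Finset.mul_sum, Finset.mul_sum, map_sum, Finset.sum_mul, ← Finset.sum_neg_distrib]
    refine Finset.sum_congr rfl fun uv _ => ?_
    have hsgn : (-1 : ℝ) ^ (uv.1 * h + uv.2 * k) = (-1) ^ (uv.1 + uv.2) := by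
      rw [pow_add, pow_add, mul_comm uv.1, mul_comm uv.2, pow_mul, pow_mul, hhodd.neg_one_pow,
        hkodd.neg_one_pow]
    have hzp : z ^ (uv.1 * h + uv.2 * k) = PowerSeries.C ((-1 : ℝ) ^ (uv.1 + uv.2)) *
        PowerSeries.mk fun i => (((uv.1 * h + uv.2 * k : ℕ) : ℝ) ^ i) / (i.factorial : ℝ) := by
      rw [hzdef, neg_pow, exp_pow', rescale_exp', ← hsgn]
      simp
    rw [hzp, mul_left_comm EN, PowerSeries.coeff_C_mul, mul_assoc, hEN, rescale_eulSer,
      coeff_mul_egf, eulerPoly, pow_succ]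
    have hps : ((h : ℝ) * k) ^ p * ∑ l ∈ Finset.range (p + 1), (p.choose l : ℝ) *
        (eulerNumber l : ℝ) * ((uv.1 : ℝ) / k + (uv.2 : ℝ) / h) ^ (p - l) =
        ∑ s ∈ Finset.range (p + 1), (p.choose s : ℝ) * (((h * k : ℕ) : ℝ) ^ s *
          (eulerNumber s : ℝ)) * ((uv.1 * h + uv.2 * k : ℕ) : ℝ) ^ (p - s) := by
      rw [Finset.mul_sum]
      refine Finset.sum_congr rfl fun s hs => ?_
      have hs' : s ≤ p := by simpa [Nat.lt_succ_iff] using hs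
      have hh0 : (h : ℝ) ≠ 0 := by positivity
      have hk0 : (k : ℝ) ≠ 0 := by positivity
      have hw : ((uv.1 * h + uv.2 * k : ℕ) : ℝ) =
          ((h : ℝ) * k) * ((uv.1 : ℝ) / k + (uv.2 : ℝ) / h) := by
        push_cast; field_simp
      have hpow : ((h : ℝ) * k) ^ p = ((h : ℝ) * k) ^ s * ((h : ℝ) * k) ^ (p - s) := by
        rw [← pow_add, Nat.add_sub_cancel' hs']
      rw [hw, mul_pow _ _ (p - s), hpow]
      push_cast
      ring
    rw [← hps]
    ring
  linear_combination cm + c2 - c3 - 2 * c1 - 2 * c4
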